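/- Let b ≥ 2 be an integer and let Q = { 2 + 2πim/log b : m ∈ ℤ } ∪ {1} ∪ { 2 - k + 2πim/log b : m ∈ ℤ, k an even integer ≥ 2 }. There exists a function G : ℂ → ℂ such that: (i) G is analytic (complex differentiable) at every point of ℂ \ Q; (ii) G(s) = ∑_{n=1}^∞ S_b(n) n^{-s} for every s with Re(s) > 2; (iii) (s-2)² G(s) → (b-1)/(2 log b) as s → 2 (s ≠ 2), and ((s-2)² G(s) - (b-1)/(2 log b))/(s-2) → ((b-1)/(2 log b))(log(2π) - 1) - (b+1)/4 as s → 2; (iv) (s-1) G(s) → (b+1)/12 as s → 1 (s ≠ 1); (v) for every nonzero m ∈ ℤ, with p = 2 + 2πim/log b, (s-p) G(s) → -((b-1)/(2πim)) (1 + 2πim/log b)^{-1} ζ(2πim/log b) as s → p (s ≠ p); (vi) for every m ∈ ℤ and every even integer k ≥ 2, with p = 2 - k + 2πim/log b, (s-p) G(s) → ((b-1)/log b) ζ(2πim/log b) (B_k/(k·(k-2)!)) ∏_{j=1}^{k-2} (2πim/log b - j) as s → p (s ≠ p). -/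

import Mathlib

open Filter Topology

noncomputable section

/-- The base-`b` digit sum of `n`. -/
def digitSum (b n : ℕ) : ℕ := (Nat.digits b n).sum

/-- The cumulative base-`b` digit sum `S_b(n) = ∑_{m=1}^{n-1} d_b(m)`. -/
def cumDigitSum (b n : ℕ) : ℕ := ∑ m ∈ Finset.range n, digitSum b m

/-! ### Part 1: combinatorics of digit sums -/

theorem digitSum_mul_add (b : ℕ) (hb : 2 ≤ b) (q r : ℕ) (hr : r < b) :
    digitSum b (r + b * q) = r + digitSum b q := by
  unfold digitSum
  by_cases h : r ≠ 0 ∨ q ≠ 0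
  · rw [Nat.digits_add b (by omega) r q hr h]
    simp
  · push Not at h
    simp [h.1, h.2]

theorem digitSum_le (b n : ℕ) : digitSum b n ≤ n := Nat.digit_sum_le b n

theorem cumDigitSum_succ (b n : ℕ) :
    cumDigitSum b (n + 1) = cumDigitSum b n + digitSum b n := by
  unfold cumDigitSum
  rw [Finset.sum_range_succ]

theorem cumDigitSum_zero (b : ℕ) : cumDigitSum b 0 = 0 := by simp [cumDigitSum]

theorem cumDigitSum_one (b : ℕ) : cumDigitSum b 1 = 0 := by simp [cumDigitSum, digitSum]

theorem cumDigitSum_le_sq (b n : ℕ) : cumDigitSum b n ≤ n ^ 2 := by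
  unfold cumDigitSum
  calc ∑ m ∈ Finset.range n, digitSum b m ≤ ∑ m ∈ Finset.range n, n :=
        Finset.sum_le_sum fun m hm =>
          (digitSum_le b m).trans (Finset.mem_range.1 hm).le
    _ = n ^ 2 := by simp [sq]

/-- first difference of the digit sum at `n+1`. -/
def cc (b n : ℕ) : ℂ := (digitSum b (n + 1) : ℂ) - digitSum b n

theorem cc_eq (b n : ℕ) : cc b n =
    (cumDigitSum b n : ℂ) + cumDigitSum b (n + 2) - 2 * cumDigitSum b (n + 1) := by
  rw [cumDigitSum_succ b (n + 1), cumDigitSum_succ b n]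
  unfold cc
  push_cast
  ring

theorem cc_not_dvd (b : ℕ) (hb : 2 ≤ b) (n : ℕ) (h : ¬ b ∣ n + 1) : cc b n = 1 := by
  obtain ⟨q, r, hr, hn⟩ : ∃ q r, r < b ∧ n + 1 = r + b * q :=
    ⟨(n + 1) / b, (n + 1) % b, Nat.mod_lt _ (by omega), (Nat.mod_add_div _ _).symm⟩
  have hr0 : r ≠ 0 := by
    rintro rfl
    exact h ⟨q, by omega⟩
  have h1 : n = (r - 1) + b * q := by omega
  unfold cc
  rw [hn, digitSum_mul_add b hb q r hr, h1, digitSum_mul_add b hb q (r - 1) (by omega)]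
  rw [Nat.cast_add, Nat.cast_add, Nat.cast_sub (by omega : 1 ≤ r)]
  push_cast
  ring

theorem cc_dvd (b : ℕ) (hb : 2 ≤ b) (m : ℕ) :
    cc b (b * (m + 1) - 1) = cc b m - ((b : ℂ) - 1) := by
  have h0 : b * (m + 1) = b * m + b := by ring
  have h1 : b * (m + 1) - 1 + 1 = 0 + b * (m + 1) := by omega
  have h2 : b * (m + 1) - 1 = (b - 1) + b * m := by omega
  unfold cc
  rw [h1, digitSum_mul_add b hb _ 0 (by omega), h2, digitSum_mul_add b hb m (b - 1) (by omega)]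
  rw [Nat.cast_add, Nat.cast_add, Nat.cast_sub (by omega : 1 ≤ b)]
  push_cast
  ring

/-! ### Part 2: the Dirichlet series of the first difference -/

theorem summable_cum (b : ℕ) (z : ℂ) (hz : 3 < z.re) (i j : ℕ) (hij : i ≤ j) (hj : 1 ≤ j) :
    Summable fun n : ℕ => (cumDigitSum b (n + i) : ℂ) * ((n + j : ℕ) : ℂ) ^ (-z) := by
  have h1 : Summable fun n : ℕ => ((n : ℝ)) ^ (2 - z.re) := by
    rw [Real.summable_nat_rpow]; linarith
  have h2 := (summable_nat_add_iff j).2 h1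
  refine Summable.of_norm_bounded h2 fun n => ?_
  rw [norm_mul, Complex.norm_natCast_cpow_of_pos (by omega), Complex.neg_re,
    sub_eq_add_neg, Real.rpow_add (by positivity)]
  gcongr
  rw [Complex.norm_natCast]
  calc (cumDigitSum b (n + i) : ℝ) ≤ ((n + i : ℕ) : ℝ) ^ 2 := by
        exact_mod_cast cumDigitSum_le_sq b (n + i)
    _ ≤ ((n + j : ℕ) : ℝ) ^ 2 := by gcongr
    _ = _ := by norm_num

/-- second difference of `n ^ (-z)` at `n+2`. -/
def Dl (z : ℂ) (n : ℕ) : ℂ :=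
  ((n + 3 : ℕ) : ℂ) ^ (-z) + ((n + 1 : ℕ) : ℂ) ^ (-z) - 2 * ((n + 2 : ℕ) : ℂ) ^ (-z)

theorem summable_cc (b : ℕ) (z : ℂ) (hz : 3 < z.re) :
    Summable fun n : ℕ => cc b n * ((n + 1 : ℕ) : ℂ) ^ (-z) := by
  have h := summable_cum b z hz
  have hA := h 0 1 (by norm_num) (by norm_num)
  have hC := h 1 1 (by norm_num) (by norm_num)
  have hB : Summable fun n : ℕ => (cumDigitSum b (n + 2) : ℂ) * ((n + 1 : ℕ) : ℂ) ^ (-z) := by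
    have h1 : Summable fun n : ℕ => ((n : ℝ)) ^ (2 - z.re) := by
      rw [Real.summable_nat_rpow]; linarith
    have h2 := ((summable_nat_add_iff 1).2 h1).mul_left 4
    refine Summable.of_norm_bounded h2 fun n => ?_
    rw [norm_mul, Complex.norm_natCast_cpow_of_pos (by omega), Complex.neg_re,
      sub_eq_add_neg, Real.rpow_add (by positivity), ← mul_assoc]
    gcongr
    rw [Complex.norm_natCast]
    calc (cumDigitSum b (n + 2) : ℝ) ≤ ((n + 2 : ℕ) : ℝ) ^ 2 := by
          exact_mod_cast cumDigitSum_le_sq b (n + 2)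
      _ ≤ 4 * ((n + 1 : ℕ) : ℝ) ^ 2 := by push_cast; nlinarith [(Nat.cast_nonneg n : (0:ℝ) ≤ n)]
      _ = _ := by norm_num
  refine ((hA.add hB).sub (hC.mul_left 2)).congr fun n => ?_
  rw [cc_eq]
  simp only [add_zero]
  ring

theorem tsum_Dl (b : ℕ) (z : ℂ) (hz : 3 < z.re) :
    (Summable fun n : ℕ => (cumDigitSum b (n + 2) : ℂ) * Dl z n) ∧
    ∑' n : ℕ, (cumDigitSum b (n + 2) : ℂ) * Dl z n =
      ∑' n : ℕ, cc b n * ((n + 1 : ℕ) : ℂ) ^ (-z) := by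
  have h := summable_cum b z hz
  have hA := h 0 1 (by norm_num) (by norm_num)
  have hC := h 1 1 (by norm_num) (by norm_num)
  have hA2 := h 2 3 (by norm_num) (by norm_num)
  have hC2 := h 2 2 (by norm_num) (by norm_num)
  have hB : Summable fun n : ℕ => (cumDigitSum b (n + 2) : ℂ) * ((n + 1 : ℕ) : ℂ) ^ (-z) := by
    refine (((summable_cc b z hz).sub hA).add (hC.mul_left 2)).congr fun n => ?_
    rw [cc_eq]
    simp only [add_zero]
    ring
  have e1 : ∑' n : ℕ, (cumDigitSum b (n + 0) : ℂ) * ((n + 1 : ℕ) : ℂ) ^ (-z) =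
      ∑' n : ℕ, (cumDigitSum b (n + 2) : ℂ) * ((n + 3 : ℕ) : ℂ) ^ (-z) := by
    rw [← hA.sum_add_tsum_nat_add 2]
    simp [Finset.sum_range_succ, cumDigitSum_zero, cumDigitSum_one, add_assoc]
  have e2 : ∑' n : ℕ, (cumDigitSum b (n + 1) : ℂ) * ((n + 1 : ℕ) : ℂ) ^ (-z) =
      ∑' n : ℕ, (cumDigitSum b (n + 2) : ℂ) * ((n + 2 : ℕ) : ℂ) ^ (-z) := by
    rw [← hC.sum_add_tsum_nat_add 1]
    simp [cumDigitSum_one, add_assoc]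
  have f1 : ∀ n : ℕ, (cumDigitSum b (n + 2) : ℂ) * Dl z n =
      (cumDigitSum b (n + 2) : ℂ) * ((n + 3 : ℕ) : ℂ) ^ (-z) +
      (cumDigitSum b (n + 2) : ℂ) * ((n + 1 : ℕ) : ℂ) ^ (-z) -
      2 * ((cumDigitSum b (n + 2) : ℂ) * ((n + 2 : ℕ) : ℂ) ^ (-z)) := by
    intro n; unfold Dl; ring
  have f2 : ∀ n : ℕ, cc b n * ((n + 1 : ℕ) : ℂ) ^ (-z) =
      (cumDigitSum b (n + 0) : ℂ) * ((n + 1 : ℕ) : ℂ) ^ (-z) +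
      (cumDigitSum b (n + 2) : ℂ) * ((n + 1 : ℕ) : ℂ) ^ (-z) -
      2 * ((cumDigitSum b (n + 1) : ℂ) * ((n + 1 : ℕ) : ℂ) ^ (-z)) := by
    intro n; rw [cc_eq]; simp only [add_zero]; ring
  constructor
  · exact ((hA2.add hB).sub (hC2.mul_left 2)).congr fun n => (f1 n).symm
  · rw [tsum_congr f1, tsum_congr f2, (hA2.add hB).tsum_sub (hC2.mul_left 2), hA2.tsum_add hB,
      (hA.add hB).tsum_sub (hC.mul_left 2), hA.tsum_add hB, tsum_mul_left, tsum_mul_left, e1, e2]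

/-- The analytic continuation of `ζ(z) (b^z - b) / (b^z - 1)`, with the removable
singularity at `1` removed. -/
def DD (b : ℕ) (z : ℂ) : ℂ :=
  riemannZeta₁ z * dslope (fun w : ℂ => (b : ℂ) ^ w) 1 z / ((b : ℂ) ^ z - 1)

theorem DD_of_ne (b : ℕ) (z : ℂ) (hz : z ≠ 1) :
    DD b z = riemannZeta z * ((b : ℂ) ^ z - b) / ((b : ℂ) ^ z - 1) := by
  have : z - 1 ≠ 0 := sub_ne_zero.2 hz
  unfold DD
  rw [dslope_of_ne _ hz, slope_def_field, riemannZeta_eq_inv_sub_mul hz]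
  simp only [Complex.cpow_one]
  field_simp

theorem DD_differentiableAt (b : ℕ) (hb : 2 ≤ b) (z : ℂ) (hz : (b : ℂ) ^ z ≠ 1) :
    DifferentiableAt ℂ (DD b) z := by
  have hb0 : (b : ℂ) ≠ 0 := by exact_mod_cast (by omega : b ≠ 0)
  have hp : Differentiable ℂ (fun w : ℂ => (b : ℂ) ^ w) := fun w =>
    (DifferentiableAt.const_cpow differentiableAt_id (Or.inl hb0))
  have hd : Differentiable ℂ (dslope (fun w : ℂ => (b : ℂ) ^ w) 1) := by
    rw [← differentiableOn_univ, Complex.differentiableOn_dslope (by simp)]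
    exact hp.differentiableOn
  unfold DD
  exact ((differentiable_riemannZeta₁ z).mul (hd z)).div ((hp z).sub_const 1) (sub_ne_zero.2 hz)

theorem tsum_cc (b : ℕ) (hb : 2 ≤ b) (z : ℂ) (hz : 3 < z.re) :
    ∑' n : ℕ, cc b n * ((n + 1 : ℕ) : ℂ) ^ (-z) = DD b z := by
  have hb0 : (b : ℂ) ≠ 0 := by exact_mod_cast (by omega : b ≠ 0)
  have hz1 : z ≠ 1 := by rintro rfl; norm_num at hz
  have hzeta : riemannZeta z = ∑' n : ℕ, ((n + 1 : ℕ) : ℂ) ^ (-z) := by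
    rw [zeta_eq_tsum_one_div_nat_add_one_cpow (by linarith)]
    refine tsum_congr fun n => ?_
    rw [Complex.cpow_neg, one_div]; push_cast; rfl
  have hszeta : Summable fun n : ℕ => ((n + 1 : ℕ) : ℂ) ^ (-z) := by
    have := (summable_nat_add_iff 1).2 (Complex.summable_one_div_nat_cpow.2 (by linarith : 1 < z.re))
    refine this.congr fun n => ?_
    rw [Complex.cpow_neg, one_div]
  have hscc := summable_cc b z hz
  set E : ℂ := ∑' n : ℕ, (cc b n - 1) * ((n + 1 : ℕ) : ℂ) ^ (-z) with hE
  have hEe : E = ∑' n : ℕ, cc b n * ((n + 1 : ℕ) : ℂ) ^ (-z) - riemannZeta z := by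
    rw [hE, hzeta, ← hscc.tsum_sub hszeta]
    exact tsum_congr fun n => by ring
  have hE2 : E = (b : ℂ) ^ (-z) * (E + riemannZeta z - b * riemannZeta z) := by
    have hinj : Function.Injective fun m : ℕ => b * (m + 1) - 1 := by
      intro x y hxy
      have h1 : 0 < b * (x + 1) := by positivity
      have h2 : 0 < b * (y + 1) := by positivity
      have h3 : b * (x + 1) = b * (y + 1) := by simp only at hxy; omega
      have := Nat.eq_of_mul_eq_mul_left (by omega) h3
      omega
    have hsupp : Function.support (fun n : ℕ => (cc b n - 1) * ((n + 1 : ℕ) : ℂ) ^ (-z)) ⊆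
        Set.range fun m : ℕ => b * (m + 1) - 1 := by
      intro n hn
      by_contra hcon
      apply hn
      have : ¬ b ∣ n + 1 := by
        rintro ⟨q, hq⟩
        apply hcon
        have hq0 : q ≠ 0 := by rintro rfl; omega
        refine ⟨q - 1, ?_⟩
        have : q - 1 + 1 = q := by omega
        simp only [this]; omega
      simp [cc_not_dvd b hb n this]
    have := hinj.tsum_eq hsupp
    have key : ∀ m : ℕ, (cc b (b * (m + 1) - 1) - 1) * ((b * (m + 1) - 1 + 1 : ℕ) : ℂ) ^ (-z) =
        (b : ℂ) ^ (-z) * (cc b m * ((m + 1 : ℕ) : ℂ) ^ (-z) - b * ((m + 1 : ℕ) : ℂ) ^ (-z)) := by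
      intro m
      have h1 : b * (m + 1) - 1 + 1 = b * (m + 1) := by
        have : 0 < b * (m + 1) := by positivity
        omega
      rw [h1, cc_dvd b hb, Nat.cast_mul, Complex.natCast_mul_natCast_cpow]
      ring
    have hEs : E = (b : ℂ) ^ (-z) * (∑' n : ℕ, cc b n * ((n + 1 : ℕ) : ℂ) ^ (-z) -
        b * riemannZeta z) := by
      rw [hE, ← this, tsum_congr key, tsum_mul_left, hscc.tsum_sub (hszeta.mul_left _),
        tsum_mul_left, hzeta]
    rw [hEe, sub_add_cancel, ← hEe]
    exact hEs
  rw [DD_of_ne b z hz1]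
  have hbz : (b : ℂ) ^ z ≠ 0 := by simp [Complex.cpow_eq_zero_iff, hb0]
  have hne : (b : ℂ) ^ z - 1 ≠ 0 := by
    intro h0
    have : ‖(b : ℂ) ^ z‖ = 1 := by rw [sub_eq_zero.1 h0]; simp
    rw [Complex.norm_natCast_cpow_of_pos (by omega)] at this
    have h2 : (1 : ℝ) < (b : ℝ) ^ z.re := by
      apply Real.one_lt_rpow
      · exact_mod_cast (by omega : 1 < b)
      · linarith
    linarith
  rw [eq_div_iff hne]
  have : ∑' n : ℕ, cc b n * ((n + 1 : ℕ) : ℂ) ^ (-z) = E + riemannZeta z := by rw [hEe]; ring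
  rw [this]
  rw [Complex.cpow_neg] at hE2
  have h3 : (b : ℂ) ^ z * E = (E + riemannZeta z - b * riemannZeta z) := by
    conv_lhs => rw [hE2]
    field_simp
  linear_combination h3

/-! ### Part 3: a uniform Taylor bound for `(1+x)^(-z)` -/

/-- rising factorial -/
def poch (j : ℕ) (z : ℂ) : ℂ := (ascPochhammer ℂ j).eval z

theorem poch_zero (z : ℂ) : poch 0 z = 1 := by simp [poch]

theorem poch_succ (j : ℕ) (z : ℂ) : poch (j + 1) z = poch j z * (z + j) := by
  simp [poch, ascPochhammer_succ_eval]

theorem poch_succ_left (j : ℕ) (z : ℂ) : poch (j + 1) z = z * poch j (z + 1) := by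
  simp [poch, ascPochhammer_succ_left]

theorem poch_add (k j : ℕ) (z : ℂ) : poch (k + j) z = poch k z * poch j (z + k) := by
  induction j with
  | zero => simp [poch_zero]
  | succ j ih => rw [← add_assoc, poch_succ, ih, poch_succ]; push_cast; ring

theorem poch_differentiable (j : ℕ) : Differentiable ℂ (poch j) := by
  unfold poch
  exact Polynomial.differentiable _

/-- Taylor remainder. -/
def TT (J : ℕ) (z : ℂ) (x : ℝ) : ℂ :=
  (1 + (x : ℂ)) ^ (-z) - ∑ j ∈ Finset.range J, (-1) ^ j * poch j z / (j.factorial : ℂ) * (x : ℂ) ^ j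

theorem TT_zero (J : ℕ) (z : ℂ) : TT (J + 1) z 0 = 0 := by
  unfold TT
  rw [Finset.sum_range_succ']
  simp [poch_zero]

theorem TT_hasDerivAt (J : ℕ) (z : ℂ) (x : ℝ) (hx : |x| ≤ 1 / 2) :
    HasDerivAt (TT (J + 1) z) (-z * TT J (z + 1) x) x := by
  have hx1 := abs_le.1 hx
  have h1 : HasDerivAt (fun y : ℂ => (1 + y) ^ (-z)) (-z * (1 + (x : ℂ)) ^ (-(z + 1))) (x : ℂ) := by
    have : HasDerivAt (fun y : ℂ => 1 + y) 1 (x : ℂ) := (hasDerivAt_id _).const_add 1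
    have h := this.cpow_const (c := -z) (Or.inl (by simp; linarith))
    convert h using 1
    rw [mul_one]
    congr 2
    ring
  have h2 : HasDerivAt (fun y : ℂ => ∑ j ∈ Finset.range (J + 1),
      (-1) ^ j * poch j z / (j.factorial : ℂ) * y ^ j)
      (-z * ∑ j ∈ Finset.range J, (-1) ^ j * poch j (z + 1) / (j.factorial : ℂ) * (x : ℂ) ^ j)
      (x : ℂ) := by
    have h : HasDerivAt (fun y : ℂ => ∑ j ∈ Finset.range (J + 1),
      (-1) ^ j * poch j z / (j.factorial : ℂ) * y ^ j)
      (∑ j ∈ Finset.range (J + 1),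
        (-1) ^ j * poch j z / (j.factorial : ℂ) * ((j : ℂ) * (x : ℂ) ^ (j - 1))) (x : ℂ) :=
      HasDerivAt.fun_sum fun j _ => (hasDerivAt_pow j (x : ℂ)).const_mul _
    convert h using 1
    rw [Finset.sum_range_succ', Finset.mul_sum]
    simp only [Nat.cast_zero, zero_mul, mul_zero, add_zero, Nat.add_sub_cancel]
    refine Finset.sum_congr rfl fun j _ => ?_
    rw [poch_succ_left, Nat.factorial_succ]
    have : (j.factorial : ℂ) ≠ 0 := by exact_mod_cast j.factorial_ne_zero
    have h3 : ((j : ℂ) + 1) ≠ 0 := by exact_mod_cast j.succ_ne_zero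
    push_cast
    field_simp
    ring
  have h := (h1.sub h2).comp_ofReal
  have e : TT (J + 1) z = fun y : ℝ => ((fun y : ℂ => (1 + y) ^ (-z)) -
      fun y : ℂ => ∑ j ∈ Finset.range (J + 1), (-1) ^ j * poch j z / (j.factorial : ℂ) * y ^ j) (y : ℂ) := by
    funext y
    rfl
  rw [e]
  refine h.congr_deriv ?_
  unfold TT
  rw [mul_sub]

theorem rpow_bd (t a R : ℝ) (h1 : 1 / 2 ≤ t) (h2 : t ≤ 2) (ha : |a| ≤ R) : t ^ a ≤ 2 ^ R := by
  have ht : 0 < t := by linarith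
  rw [Real.rpow_def_of_pos ht, Real.rpow_def_of_pos (by norm_num)]
  apply Real.exp_le_exp.2
  have hl1 : Real.log t ≤ Real.log 2 := Real.log_le_log ht h2
  have hl2 : -Real.log 2 ≤ Real.log t := by
    rw [← Real.log_inv]
    exact Real.log_le_log (by norm_num) (by linarith)
  calc Real.log t * a ≤ |Real.log t * a| := le_abs_self _
    _ = |Real.log t| * |a| := abs_mul _ _
    _ ≤ Real.log 2 * R := by
      gcongr
      exact abs_le.2 ⟨hl2, hl1⟩

theorem TT_bound (J : ℕ) : ∀ R : ℝ, 0 ≤ R → ∃ C : ℝ, 0 ≤ C ∧ ∀ z : ℂ, ‖z‖ ≤ R → ∀ x : ℝ, |x| ≤ 1 / 2 →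
    ‖TT J z x‖ ≤ C * |x| ^ J := by
  induction J with
  | zero =>
    intro R hR
    refine ⟨2 ^ R, by positivity, fun z hz x hx => ?_⟩
    have hx1 := abs_le.1 hx
    have : (1 + (x : ℂ)) = ((1 + x : ℝ) : ℂ) := by push_cast; rfl
    simp only [TT, Finset.range_zero, Finset.sum_empty, sub_zero, pow_zero, mul_one]
    rw [this, Complex.norm_cpow_eq_rpow_re_of_pos (by linarith)]
    apply rpow_bd _ _ _ (by linarith) (by linarith)
    rw [Complex.neg_re, abs_neg]
    exact (Complex.abs_re_le_norm z).trans hz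
  | succ J ih =>
    intro R hR
    obtain ⟨C, hC, h⟩ := ih (R + 1) (by linarith)
    refine ⟨R * C, by positivity, fun z hz x hx => ?_⟩
    have key := Convex.norm_image_sub_le_of_norm_hasDerivWithin_le (𝕜 := ℝ) (f := TT (J + 1) z)
      (f' := fun y => -z * TT J (z + 1) y) (s := Set.Icc (-|x|) |x|) (C := R * (C * |x| ^ J))
      (x := 0) (y := x)
      (fun y hy => (TT_hasDerivAt J z y ((abs_le.2 hy).trans hx)).hasDerivWithinAt)
      (fun y hy => by
        have hy' : |y| ≤ |x| := abs_le.2 hy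
        rw [norm_mul, norm_neg]
        have h1 : ‖z + 1‖ ≤ R + 1 := (norm_add_le _ _).trans (by simpa using hz)
        have h2 := h (z + 1) h1 y (hy'.trans hx)
        gcongr
        exact h2.trans (by gcongr))
      (convex_Icc _ _) ⟨by simp, by simp⟩ ⟨neg_abs_le x, le_abs_self x⟩
    rw [TT_zero, sub_zero, sub_zero, Real.norm_eq_abs] at key
    calc _ ≤ _ := key
      _ = _ := by ring

/-! ### Part 4: the Bernoulli identity -/

/-- coefficients -/
def aa (k : ℕ) : ℂ := -(bernoulli k : ℂ) * ((k : ℂ) - 1) / (k.factorial : ℂ)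

/-- coefficients of `exp t + exp (-t) - 2` -/
def gg (j : ℕ) : ℂ := (1 + (-1) ^ j - 2 * (if j = 0 then 1 else 0)) / (j.factorial : ℂ)

theorem aa_zero : aa 0 = 1 := by simp [aa]

theorem aa_odd (k : ℕ) (h : ¬ Even k) : aa k = 0 := by
  unfold aa
  by_cases h1 : k = 1
  · simp [h1]
  · rw [bernoulli_eq_zero_of_odd (Nat.not_even_iff_odd.1 h) (by
      rcases k with _ | _ | k
      · simp at h
      · simp at h1
      · omega)]
    simp

theorem bern_id (N : ℕ) : ∑ p ∈ Finset.HasAntidiagonal.antidiagonal N, aa p.1 * gg p.2 = if N = 2 then 1 else 0 := by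
  open PowerSeries in
  set β := bernoulliPowerSeries ℂ with hβ
  set E := PowerSeries.exp ℂ with hE
  set E' := evalNegHom E with hE'
  have h1 : β * (E - 1) = X := bernoulliPowerSeries_mul_exp_sub_one ℂ
  have h2 : E * E' = 1 := exp_mul_exp_neg_eq_one
  have h3 : d⁄dX ℂ β * (E - 1) + β * E = 1 := by
    have := congrArg (d⁄dX ℂ) h1
    simp only [Derivation.leibniz, map_sub, smul_eq_mul, derivative_X, hE, derivative_exp] at this
    simp only [Derivation.map_one_eq_zero, sub_zero] at this
    rw [hE]
    linear_combination this
  have h4 : (β - X * d⁄dX ℂ β) * (E + E' - 2) = X ^ 2 := by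
    have h6 : E + E' - 2 = E' * (E - 1) ^ 2 := by linear_combination (2 - E) * h2
    rw [h6]
    linear_combination (E' * (E - 1) + X * E * E') * h1 - X * E' * (E - 1) * h3 + X ^ 2 * h2
  have h5 := congrArg (coeff N) h4
  rw [coeff_mul, coeff_X_pow] at h5
  rw [← h5]
  refine Finset.sum_congr rfl fun p _ => ?_
  congr 1
  · rw [map_sub]
    unfold aa
    rcases p.1 with _ | k
    · simp [hβ, bernoulliPowerSeries]
    · rw [coeff_succ_X_mul, coeff_derivative]
      simp only [hβ, bernoulliPowerSeries, coeff_mk]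
      simp
      ring
  · simp only [map_sub, map_add, hE', hE, evalNegHom, coeff_rescale, coeff_exp, gg]
    have : (2 : ℂ⟦X⟧) = C 2 := (map_ofNat C 2).symm
    rw [this, coeff_C]
    by_cases h : p.2 = 0
    · simp [h]
    · simp [h]
      ring

/-! ### Part 5: the remainder series -/

/-- remainder terms -/
def ee (L : ℕ) (s : ℂ) (n : ℕ) : ℂ :=
  (s - 1) * (s - 2) * ((n + 2 : ℕ) : ℂ) ^ (-s) -
    ∑ k ∈ Finset.range L, aa k * poch k (s - 2) * Dl (s + k - 2) n

theorem Dl_eq (z : ℂ) (n : ℕ) (x : ℝ) (hx : x = 1 / ((n + 2 : ℕ) : ℝ)) :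
    Dl z n = ((n + 2 : ℕ) : ℂ) ^ (-z) *
      ((1 + (x : ℂ)) ^ (-z) + (1 + ((-x : ℝ) : ℂ)) ^ (-z) - 2) := by
  have hN : (0 : ℝ) < ((n + 2 : ℕ) : ℝ) := by positivity
  have hN2 : (2 : ℝ) ≤ ((n + 2 : ℕ) : ℝ) := by push_cast; linarith [(Nat.cast_nonneg n : (0:ℝ) ≤ n)]
  have hx1 : x ≤ 1 / 2 := by rw [hx]; gcongr
  have hx0 : 0 < x := by rw [hx]; positivity
  have h1 : ((n + 3 : ℕ) : ℂ) ^ (-z) = ((n + 2 : ℕ) : ℂ) ^ (-z) * (1 + (x : ℂ)) ^ (-z) := by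
    have := Complex.mul_cpow_ofReal_nonneg hN.le (by linarith : 0 ≤ 1 + x) (-z)
    rw [← Complex.ofReal_mul] at this
    have e : ((n + 2 : ℕ) : ℝ) * (1 + x) = ((n + 3 : ℕ) : ℝ) := by
      rw [hx]; field_simp; push_cast; ring
    rw [e] at this
    simpa using this
  have h2 : ((n + 1 : ℕ) : ℂ) ^ (-z) = ((n + 2 : ℕ) : ℂ) ^ (-z) * (1 + ((-x : ℝ) : ℂ)) ^ (-z) := by
    have := Complex.mul_cpow_ofReal_nonneg hN.le (by linarith : 0 ≤ 1 + -x) (-z)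
    rw [← Complex.ofReal_mul] at this
    have e : ((n + 2 : ℕ) : ℝ) * (1 + -x) = ((n + 1 : ℕ) : ℝ) := by
      rw [hx]; field_simp; push_cast; ring
    rw [e] at this
    simpa using this
  unfold Dl
  rw [h1, h2]
  ring

theorem TT_add (J : ℕ) (z : ℂ) (x : ℝ) :
    (1 + (x : ℂ)) ^ (-z) + (1 + ((-x : ℝ) : ℂ)) ^ (-z) - 2 =
      TT (J + 1) z x + TT (J + 1) z (-x) + ∑ j ∈ Finset.range (J + 1), poch j z * gg j * (x : ℂ) ^ j := by
  have h2 : (2 : ℂ) = ∑ j ∈ Finset.range (J + 1),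
      2 * (if j = 0 then 1 else 0) * poch j z / (j.factorial : ℂ) * (x : ℂ) ^ j := by
    rw [Finset.sum_range_succ']
    simp [poch_zero]
  have h3 : ∑ j ∈ Finset.range (J + 1), poch j z * gg j * (x : ℂ) ^ j =
      ∑ j ∈ Finset.range (J + 1), (-1) ^ j * poch j z / (j.factorial : ℂ) * (x : ℂ) ^ j +
      ∑ j ∈ Finset.range (J + 1), (-1) ^ j * poch j z / (j.factorial : ℂ) * ((-x : ℝ) : ℂ) ^ j - 2 := by
    conv_rhs => rw [h2]
    rw [← Finset.sum_add_distrib, ← Finset.sum_sub_distrib]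
    refine Finset.sum_congr rfl fun j _ => ?_
    rw [Complex.ofReal_neg, neg_pow (x : ℂ) j]
    have : ((-1 : ℂ) ^ j) * (-1) ^ j = 1 := by rw [← mul_pow]; simp
    unfold gg
    linear_combination (-(poch j z / (j.factorial : ℂ) * (x : ℂ) ^ j)) * this
  rw [h3]
  unfold TT
  ring

theorem double_sum (L : ℕ) (hL : 3 ≤ L) (s : ℂ) (x : ℂ) :
    ∑ k ∈ Finset.range L, aa k * poch k (s - 2) * x ^ k *
      ∑ j ∈ Finset.range (L - k), poch j (s + k - 2) * gg j * x ^ j = (s - 1) * (s - 2) * x ^ 2 := by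
  have h1 : ∀ k ∈ Finset.range L, aa k * poch k (s - 2) * x ^ k *
      ∑ j ∈ Finset.range (L - k), poch j (s + k - 2) * gg j * x ^ j =
      ∑ j ∈ Finset.range (L - k), (fun k j => aa k * gg j * (poch (k + j) (s - 2) * x ^ (k + j))) k j := by
    intro k _
    rw [Finset.mul_sum]
    refine Finset.sum_congr rfl fun j _ => ?_
    simp only
    rw [poch_add, pow_add, show s - 2 + (k : ℂ) = s + k - 2 by ring]
    ring
  rw [Finset.sum_congr rfl h1, ← Finset.sum_range_diag_flip]
  have h2 : ∀ m ∈ Finset.range L, ∑ k ∈ Finset.range (m + 1),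
      (fun k j => aa k * gg j * (poch (k + j) (s - 2) * x ^ (k + j))) k (m - k) =
      if m = 2 then (s - 1) * (s - 2) * x ^ 2 else 0 := by
    intro m _
    rw [← Finset.Nat.sum_antidiagonal_eq_sum_range_succ
      (fun k j => aa k * gg j * (poch (k + j) (s - 2) * x ^ (k + j))) m]
    have : ∀ p ∈ Finset.HasAntidiagonal.antidiagonal m,
        aa p.1 * gg p.2 * (poch (p.1 + p.2) (s - 2) * x ^ (p.1 + p.2)) =
        aa p.1 * gg p.2 * (poch m (s - 2) * x ^ m) := by
      intro p hp
      rw [Finset.HasAntidiagonal.mem_antidiagonal.1 hp]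
    rw [Finset.sum_congr rfl this, ← Finset.sum_mul, bern_id]
    split_ifs with h
    · subst h
      rw [poch_succ, poch_succ, poch_zero]
      push_cast
      ring
    · simp
  rw [Finset.sum_congr rfl h2, Finset.sum_ite_eq']
  simp [show 2 < L by omega]

theorem ee_eq (L : ℕ) (hL : 3 ≤ L) (s : ℂ) (n : ℕ) (x : ℝ) (hx : x = 1 / ((n + 2 : ℕ) : ℝ)) :
    ee L s n = -((n + 2 : ℕ) : ℂ) ^ (2 - s) * ∑ k ∈ Finset.range L, aa k * poch k (s - 2) *
      (x : ℂ) ^ k * (TT (L - k) (s + k - 2) x + TT (L - k) (s + k - 2) (-x)) := by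
  have hN : ((n + 2 : ℕ) : ℂ) ≠ 0 := by exact_mod_cast (by omega : n + 2 ≠ 0)
  have hxN : (x : ℂ) * ((n + 2 : ℕ) : ℂ) = 1 := by
    rw [hx]; push_cast; push_cast at hN; field_simp
  have h1 : ((n + 2 : ℕ) : ℂ) ^ (-s) = ((n + 2 : ℕ) : ℂ) ^ (2 - s) * (x : ℂ) ^ 2 := by
    have : ((n + 2 : ℕ) : ℂ) ^ (2 - s) = ((n + 2 : ℕ) : ℂ) ^ (-s) * ((n + 2 : ℕ) : ℂ) ^ 2 := by
      rw [show (2 - s) = -s + (2 : ℕ) by push_cast; ring, Complex.cpow_add _ _ hN, Complex.cpow_natCast]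
    rw [this, mul_assoc, ← mul_pow, mul_comm _ (x : ℂ), hxN]
    simp
  have h2 : ∀ k ∈ Finset.range L, aa k * poch k (s - 2) * Dl (s + k - 2) n =
      ((n + 2 : ℕ) : ℂ) ^ (2 - s) * (aa k * poch k (s - 2) *
      (x : ℂ) ^ k * (TT (L - k) (s + k - 2) x + TT (L - k) (s + k - 2) (-x))) +
      ((n + 2 : ℕ) : ℂ) ^ (2 - s) * (aa k * poch k (s - 2) * (x : ℂ) ^ k *
      ∑ j ∈ Finset.range (L - k), poch j (s + k - 2) * gg j * (x : ℂ) ^ j) := by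
    intro k hk
    have hk' := Finset.mem_range.1 hk
    have h3 : ((n + 2 : ℕ) : ℂ) ^ (-(s + k - 2)) = ((n + 2 : ℕ) : ℂ) ^ (2 - s) * (x : ℂ) ^ k := by
      have : ((n + 2 : ℕ) : ℂ) ^ (2 - s) =
          ((n + 2 : ℕ) : ℂ) ^ (-(s + k - 2)) * ((n + 2 : ℕ) : ℂ) ^ k := by
        rw [show (2 - s) = -(s + k - 2) + (k : ℕ) by ring, Complex.cpow_add _ _ hN,
          Complex.cpow_natCast]
      rw [this, mul_assoc, ← mul_pow, mul_comm _ (x : ℂ), hxN]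
      simp
    rw [Dl_eq _ n x hx, h3]
    obtain ⟨J, hJ⟩ : ∃ J, L - k = J + 1 := ⟨L - k - 1, by omega⟩
    rw [hJ, TT_add J]
    ring
  unfold ee
  rw [Finset.sum_congr rfl h2, Finset.sum_add_distrib, ← Finset.mul_sum, ← Finset.mul_sum,
    double_sum L hL s, h1]
  ring

theorem ee_bound (L : ℕ) (hL : 3 ≤ L) (R : ℝ) (hR : 0 ≤ R) : ∃ C : ℝ, 0 ≤ C ∧ ∀ s : ℂ, ‖s‖ ≤ R →
    ∀ n : ℕ, ‖ee L s n‖ ≤ C * ((n + 2 : ℕ) : ℝ) ^ (2 - s.re - L) := by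
  have hP : ∀ k : ℕ, ∃ P : ℝ, ∀ s : ℂ, ‖s‖ ≤ R → ‖poch k (s - 2)‖ ≤ P := by
    intro k
    obtain ⟨P, hP⟩ := (isCompact_closedBall (0 : ℂ) R).exists_bound_of_continuousOn
      (f := fun s => poch k (s - 2))
      (((poch_differentiable k).continuous.comp (continuous_id.sub continuous_const)).continuousOn)
    exact ⟨P, fun s hs => hP s (by simpa using hs)⟩
  have hT : ∀ k : ℕ, ∃ C : ℝ, 0 ≤ C ∧ ∀ z : ℂ, ‖z‖ ≤ R + k + 2 → ∀ x : ℝ, |x| ≤ 1 / 2 →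
    ‖TT (L - k) z x‖ ≤ C * |x| ^ (L - k) := fun k => TT_bound (L - k) _ (by positivity)
  choose P hP using hP
  choose C hC0 hC using hT
  refine ⟨∑ k ∈ Finset.range L, ‖aa k‖ * |P k| * (2 * C k), ?_, ?_⟩
  · exact Finset.sum_nonneg fun k _ => by have := hC0 k; positivity
  intro s hs n
  have hN2 : (2 : ℝ) ≤ ((n + 2 : ℕ) : ℝ) := by push_cast; linarith [(Nat.cast_nonneg n : (0:ℝ) ≤ n)]
  have hNpos : (0 : ℝ) < ((n + 2 : ℕ) : ℝ) := by linarith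
  set x : ℝ := 1 / ((n + 2 : ℕ) : ℝ) with hx
  have hx0 : 0 < x := by positivity
  have hx1 : x ≤ 1 / 2 := by rw [hx]; gcongr
  have hxa : |x| = x := abs_of_pos hx0
  rw [ee_eq L hL s n x hx, norm_mul, norm_neg, Complex.norm_natCast_cpow_of_pos (by omega)]
  have hxL : ((n + 2 : ℕ) : ℝ) ^ (2 - s.re - L) = ((n + 2 : ℕ) : ℝ) ^ (2 - s.re) * x ^ L := by
    rw [Real.rpow_sub hNpos, Real.rpow_natCast, hx, one_div, inv_pow]
    rfl
  rw [hxL, show (2 - s : ℂ).re = 2 - s.re by simp]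
  have hsum : ‖∑ k ∈ Finset.range L, aa k * poch k (s - 2) *
      (x : ℂ) ^ k * (TT (L - k) (s + k - 2) x + TT (L - k) (s + k - 2) (-x))‖ ≤
      (∑ k ∈ Finset.range L, ‖aa k‖ * |P k| * (2 * C k)) * x ^ L := by
    rw [Finset.sum_mul]
    refine norm_sum_le_of_le _ fun k hk => ?_
    have hk' := Finset.mem_range.1 hk
    have hz : ‖s + k - 2‖ ≤ R + k + 2 := by
      calc ‖s + k - 2‖ ≤ ‖s + k‖ + ‖(2 : ℂ)‖ := norm_sub_le _ _
        _ ≤ ‖s‖ + ‖(k : ℂ)‖ + ‖(2 : ℂ)‖ := by gcongr; exact norm_add_le _ _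
        _ ≤ R + k + 2 := by simp; linarith
    have t1 := hC k _ hz x (by rw [hxa]; exact hx1)
    have t2 := hC k _ hz (-x) (by rw [abs_neg, hxa]; exact hx1)
    rw [abs_neg] at t2
    rw [hxa] at t1 t2
    have t3 : ‖TT (L - k) (s + k - 2) x + TT (L - k) (s + k - 2) (-x)‖ ≤ 2 * C k * x ^ (L - k) :=
      (norm_add_le _ _).trans (by linarith)
    rw [norm_mul, norm_mul, norm_mul, norm_pow, Complex.norm_real, Real.norm_eq_abs, hxa]
    have hp : ‖poch k (s - 2)‖ ≤ |P k| := (hP k s hs).trans (le_abs_self _)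
    have hxx : x ^ L = x ^ k * x ^ (L - k) := by rw [← pow_add]; congr 1; omega
    calc _ ≤ ‖aa k‖ * |P k| * x ^ k * (2 * C k * x ^ (L - k)) := by gcongr
      _ = _ := by rw [hxx]; ring
  calc _ ≤ ((n + 2 : ℕ) : ℝ) ^ (2 - s.re) * ((∑ k ∈ Finset.range L, ‖aa k‖ * |P k| * (2 * C k)) * x ^ L) := by
        gcongr
    _ = _ := by ring

theorem Dl_differentiable (n : ℕ) : Differentiable ℂ fun z => Dl z n := by
  have h : ∀ m : ℕ, m ≠ 0 → Differentiable ℂ fun z : ℂ => (m : ℂ) ^ (-z) := fun m hm z =>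
    DifferentiableAt.const_cpow differentiableAt_id.neg (Or.inl (by exact_mod_cast hm))
  unfold Dl
  exact ((h _ (by omega)).add (h _ (by omega))).sub ((h _ (by omega)).const_mul 2)

theorem ee_differentiable (L n : ℕ) : Differentiable ℂ fun s => ee L s n := by
  have h : Differentiable ℂ fun z : ℂ => ((n + 2 : ℕ) : ℂ) ^ (-z) := fun z =>
    DifferentiableAt.const_cpow differentiableAt_id.neg
      (Or.inl (by exact_mod_cast (by omega : n + 2 ≠ 0)))
  unfold ee
  refine ((((differentiable_id.sub_const 1).mul (differentiable_id.sub_const 2))).mul h).sub ?_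
  refine Differentiable.fun_sum fun k _ => ?_
  refine Differentiable.mul (Differentiable.const_mul ?_ _) ?_
  · exact (poch_differentiable k).comp (differentiable_id.sub_const 2)
  · exact (Dl_differentiable n).comp ((differentiable_id.add_const (k : ℂ)).sub_const 2)

/-- remainder series -/
def HH (b L : ℕ) (s : ℂ) : ℂ := ∑' n : ℕ, (cumDigitSum b (n + 2) : ℂ) * ee L s n

theorem HH_summable (b L : ℕ) (hL : 3 ≤ L) (s : ℂ) (hs : 6 - (L : ℝ) < s.re) :
    Summable fun n : ℕ => (cumDigitSum b (n + 2) : ℂ) * ee L s n := by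
  obtain ⟨C, hC0, hC⟩ := ee_bound L hL ‖s‖ (by positivity)
  have hsum : Summable fun n : ℕ => C * ((n + 2 : ℕ) : ℝ) ^ (-2 : ℝ) := by
    have h1 : Summable fun n : ℕ => ((n : ℝ)) ^ (-2 : ℝ) := by
      rw [Real.summable_nat_rpow]; norm_num
    exact ((summable_nat_add_iff 2).2 h1).mul_left C
  refine Summable.of_norm_bounded hsum fun n => ?_
  rw [norm_mul, Complex.norm_natCast]
  have hn : (1 : ℝ) ≤ ((n + 2 : ℕ) : ℝ) := by exact_mod_cast (by omega : 1 ≤ n + 2)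
  have h1 := hC s le_rfl n
  have h2 : (cumDigitSum b (n + 2) : ℝ) ≤ ((n + 2 : ℕ) : ℝ) ^ (2 : ℝ) := by
    have : (cumDigitSum b (n + 2) : ℝ) ≤ ((n + 2 : ℕ) : ℝ) ^ 2 := by
      exact_mod_cast cumDigitSum_le_sq b (n + 2)
    simpa using this
  calc _ ≤ ((n + 2 : ℕ) : ℝ) ^ (2 : ℝ) * (C * ((n + 2 : ℕ) : ℝ) ^ (2 - s.re - L)) := by gcongr
    _ = C * ((n + 2 : ℕ) : ℝ) ^ (2 + (2 - s.re - L)) := by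
      rw [Real.rpow_add (by linarith)]; ring
    _ ≤ _ := by
      have h4 : 2 + (2 - s.re - (L : ℝ)) ≤ -2 := by linarith
      gcongr

theorem HH_differentiableAt (b L : ℕ) (hL : 3 ≤ L) (s₀ : ℂ) (hs : 6 - (L : ℝ) < s₀.re) :
    DifferentiableAt ℂ (HH b L) s₀ := by
  set U : Set ℂ := {s : ℂ | 6 - (L : ℝ) < s.re} ∩ Metric.ball 0 (‖s₀‖ + 1) with hU
  have hUo : IsOpen U :=
    (isOpen_lt continuous_const Complex.continuous_re).inter Metric.isOpen_ball
  have hsU : s₀ ∈ U := ⟨hs, by simp⟩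
  obtain ⟨C, hC0, hC⟩ := ee_bound L hL (‖s₀‖ + 1) (by positivity)
  have hsum : Summable fun n : ℕ => C * ((n + 2 : ℕ) : ℝ) ^ (-2 : ℝ) := by
    have h1 : Summable fun n : ℕ => ((n : ℝ)) ^ (-2 : ℝ) := by
      rw [Real.summable_nat_rpow]; norm_num
    exact ((summable_nat_add_iff 2).2 h1).mul_left C
  have := Complex.differentiableOn_tsum_of_summable_norm (U := U)
    (F := fun n s => (cumDigitSum b (n + 2) : ℂ) * ee L s n) hsum
    (fun n => ((ee_differentiable L n).const_mul _).differentiableOn) hUo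
    (fun n s hs => by
      rw [norm_mul, Complex.norm_natCast]
      have hn : (1 : ℝ) ≤ ((n + 2 : ℕ) : ℝ) := by exact_mod_cast (by omega : 1 ≤ n + 2)
      have h1 := hC s (by have := hs.2; simp at this; exact this.le) n
      have h2 : (cumDigitSum b (n + 2) : ℝ) ≤ ((n + 2 : ℕ) : ℝ) ^ (2 : ℝ) := by
        have : (cumDigitSum b (n + 2) : ℝ) ≤ ((n + 2 : ℕ) : ℝ) ^ 2 := by
          exact_mod_cast cumDigitSum_le_sq b (n + 2)
        simpa using this
      have h3 : (6 : ℝ) - L < s.re := hs.1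
      calc _ ≤ ((n + 2 : ℕ) : ℝ) ^ (2 : ℝ) * (C * ((n + 2 : ℕ) : ℝ) ^ (2 - s.re - L)) := by gcongr
        _ = C * ((n + 2 : ℕ) : ℝ) ^ (2 + (2 - s.re - L)) := by
          rw [Real.rpow_add (by linarith)]; ring
        _ ≤ _ := by
          have h4 : 2 + (2 - s.re - (L : ℝ)) ≤ -2 := by linarith
          gcongr)
  exact (this s₀ hsU).differentiableAt (hUo.mem_nhds hsU)

/-! ### Part 6: gluing -/

/-- `GG b L` is the continuation to `Re s > 6 - L`. -/
def GG (b L : ℕ) (s : ℂ) : ℂ :=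
  (∑ k ∈ Finset.range L, aa k * poch k (s - 2) * DD b (s + k - 2) + HH b L s) / ((s - 1) * (s - 2))

theorem GG_succ (b : ℕ) (hb : 2 ≤ b) (L : ℕ) (hL : 3 ≤ L) (s : ℂ) (hs : 6 - (L : ℝ) < s.re) :
    GG b (L + 1) s = GG b L s := by
  have hz : 3 < (s + L - 2).re := by simp; linarith
  obtain ⟨h1, h2⟩ := tsum_Dl b (s + L - 2) hz
  rw [tsum_cc b hb _ hz] at h2
  have h3 : HH b (L + 1) s = HH b L s - aa L * poch L (s - 2) * DD b (s + L - 2) := by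
    unfold HH
    rw [← h2, ← tsum_mul_left, ← (HH_summable b L hL s hs).tsum_sub (h1.mul_left _)]
    refine tsum_congr fun n => ?_
    unfold ee
    rw [Finset.sum_range_succ]
    ring
  unfold GG
  rw [Finset.sum_range_succ, h3]
  congr 1
  ring

theorem GG_add (b : ℕ) (hb : 2 ≤ b) (L : ℕ) (hL : 3 ≤ L) (s : ℂ) (hs : 6 - (L : ℝ) < s.re) (i : ℕ) :
    GG b (L + i) s = GG b L s := by
  induction i with
  | zero => rfl
  | succ i ih =>
    rw [← add_assoc, GG_succ b hb (L + i) (by omega) s ?_, ih]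
    push_cast
    linarith [(Nat.cast_nonneg i : (0 : ℝ) ≤ i)]

theorem GG_eq (b : ℕ) (hb : 2 ≤ b) (L L' : ℕ) (hL : 3 ≤ L) (hL' : 3 ≤ L') (s : ℂ)
    (hs : 6 - (L : ℝ) < s.re) (hs' : 6 - (L' : ℝ) < s.re) : GG b L s = GG b L' s := by
  rcases le_total L L' with h | h
  · obtain ⟨i, rfl⟩ := Nat.exists_eq_add_of_le h
    exact (GG_add b hb L hL s hs i).symm
  · obtain ⟨i, rfl⟩ := Nat.exists_eq_add_of_le h
    exact GG_add b hb L' hL' s hs' i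

/-- index used at `s` -/
def idx (s : ℂ) : ℕ := ⌈7 - s.re⌉₊ + 3

theorem idx_spec (s : ℂ) : 6 - (idx s : ℝ) < s.re := by
  unfold idx
  have := Nat.le_ceil (7 - s.re)
  push_cast
  linarith

/-- the continuation -/
def GF (b : ℕ) (s : ℂ) : ℂ := GG b (idx s) s

theorem GF_eq (b : ℕ) (hb : 2 ≤ b) (L : ℕ) (hL : 3 ≤ L) (s : ℂ) (hs : 6 - (L : ℝ) < s.re) :
    GF b s = GG b L s :=
  GG_eq b hb _ _ (by unfold idx; omega) hL s (idx_spec s) hs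

theorem GF_eventuallyEq (b : ℕ) (hb : 2 ≤ b) (L : ℕ) (hL : 3 ≤ L) (s : ℂ)
    (hs : 6 - (L : ℝ) < s.re) : GF b =ᶠ[𝓝 s] GG b L := by
  have : {z : ℂ | 6 - (L : ℝ) < z.re} ∈ 𝓝 s :=
    (isOpen_lt continuous_const Complex.continuous_re).mem_nhds hs
  filter_upwards [this] with z hz
  exact GF_eq b hb L hL z hz

theorem GG_large (b : ℕ) (hb : 2 ≤ b) (s : ℂ) (hs : 6 < s.re) :
    GF b s = ∑' n : ℕ, (cumDigitSum b (n + 1) : ℂ) * ((n + 1 : ℕ) : ℂ) ^ (-s) := by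
  rw [GF_eq b hb 3 le_rfl s (by norm_num; linarith)]
  have h1 : s - 1 ≠ 0 := by
    intro h; rw [sub_eq_zero] at h; rw [h] at hs; norm_num at hs
  have h2 : s - 2 ≠ 0 := by
    intro h; rw [sub_eq_zero] at h; rw [h] at hs; norm_num at hs
  have hz : ∀ k : ℕ, 3 < (s + k - 2).re := fun k => by
    simp; linarith [(Nat.cast_nonneg k : (0 : ℝ) ≤ k)]
  have hS := summable_cum b s (by linarith) 2 2 le_rfl (by norm_num)
  have hS1 := summable_cum b s (by linarith) 1 1 le_rfl (by norm_num)
  have e1 : ∑' n : ℕ, (cumDigitSum b (n + 1) : ℂ) * ((n + 1 : ℕ) : ℂ) ^ (-s) =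
      ∑' n : ℕ, (cumDigitSum b (n + 2) : ℂ) * ((n + 2 : ℕ) : ℂ) ^ (-s) := by
    rw [← hS1.sum_add_tsum_nat_add 1]
    simp [cumDigitSum_one, add_assoc]
  have hH : HH b 3 s = (s - 1) * (s - 2) *
      (∑' n : ℕ, (cumDigitSum b (n + 1) : ℂ) * ((n + 1 : ℕ) : ℂ) ^ (-s)) -
      ∑ k ∈ Finset.range 3, aa k * poch k (s - 2) * DD b (s + k - 2) := by
    have hk : ∀ k ∈ Finset.range 3, aa k * poch k (s - 2) * DD b (s + k - 2) =
        ∑' n : ℕ, aa k * poch k (s - 2) * ((cumDigitSum b (n + 2) : ℂ) * Dl (s + k - 2) n) := by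
      intro k _
      rw [tsum_mul_left, (tsum_Dl b _ (hz k)).2, tsum_cc b hb _ (hz k)]
    have hks : ∀ k ∈ Finset.range 3, Summable fun n : ℕ =>
        aa k * poch k (s - 2) * ((cumDigitSum b (n + 2) : ℂ) * Dl (s + k - 2) n) :=
      fun k _ => (tsum_Dl b _ (hz k)).1.mul_left _
    rw [Finset.sum_congr rfl hk, ← Summable.tsum_finsetSum hks, e1, ← tsum_mul_left,
      ← (hS.mul_left _).tsum_sub (summable_sum hks)]
    unfold HH
    refine tsum_congr fun n => ?_
    unfold ee
    rw [mul_sub, Finset.mul_sum]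
    congr 1
    · ring
    · exact Finset.sum_congr rfl fun k _ => by ring
  unfold GG
  rw [hH, div_eq_iff (mul_ne_zero h1 h2)]
  ring

/-! ### Part 7: analyticity and agreement with the Dirichlet series -/

theorem log_ne (b : ℕ) (hb : 2 ≤ b) : (Real.log b : ℂ) ≠ 0 := by
  have : Real.log b ≠ 0 := (Real.log_pos (by exact_mod_cast (by omega : 1 < b))).ne'
  exact_mod_cast this

theorem cpow_eq_exp (b : ℕ) (hb : 2 ≤ b) (z : ℂ) :
    (b : ℂ) ^ z = Complex.exp (Real.log b * z) := by
  rw [Complex.cpow_def_of_ne_zero (by exact_mod_cast (by omega : b ≠ 0)), Complex.natCast_log]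

theorem cpow_eq_one (b : ℕ) (hb : 2 ≤ b) (z : ℂ) (h : (b : ℂ) ^ z = 1) :
    ∃ m : ℤ, z = 2 * Real.pi * Complex.I * m / Real.log b := by
  rw [cpow_eq_exp b hb, Complex.exp_eq_one_iff] at h
  obtain ⟨m, hm⟩ := h
  refine ⟨m, ?_⟩
  rw [eq_div_iff (log_ne b hb)]
  linear_combination hm

theorem cpow_pole (b : ℕ) (hb : 2 ≤ b) (m : ℤ) :
    (b : ℂ) ^ (2 * Real.pi * Complex.I * m / Real.log b : ℂ) = 1 := by
  rw [cpow_eq_exp b hb, Complex.exp_eq_one_iff]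
  refine ⟨m, ?_⟩
  have := log_ne b hb
  field_simp

theorem pole_re (b : ℕ) (m : ℤ) : (2 * Real.pi * Complex.I * m / Real.log b : ℂ).re = 0 := by
  have : (2 * Real.pi * Complex.I * m / Real.log b : ℂ) =
      ((2 * Real.pi * m / Real.log b : ℝ) : ℂ) * Complex.I := by push_cast; ring
  rw [this, Complex.re_ofReal_mul, Complex.I_re, mul_zero]

theorem cpow_ne_one (b : ℕ) (hb : 2 ≤ b) (z : ℂ) (h : z.re ≠ 0) : (b : ℂ) ^ z ≠ 1 := by
  intro h1
  obtain ⟨m, rfl⟩ := cpow_eq_one b hb z h1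
  exact h (pole_re b m)

theorem pochD (k : ℕ) (s : ℂ) : DifferentiableAt ℂ (fun s => poch k (s - 2)) s :=
  ((poch_differentiable k).comp (differentiable_id.sub_const 2)) s

theorem term_diff (b : ℕ) (hb : 2 ≤ b) (k : ℕ) (s : ℂ)
    (h : Even k → (b : ℂ) ^ (s + k - 2) ≠ 1) :
    DifferentiableAt ℂ (fun s => aa k * poch k (s - 2) * DD b (s + k - 2)) s := by
  by_cases hk : Even k
  · refine DifferentiableAt.mul ((pochD k s).const_mul _) ?_
    exact DifferentiableAt.comp (f := fun s : ℂ => s + k - 2) s (DD_differentiableAt b hb _ (h hk))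
      ((differentiableAt_id.add_const _).sub_const _)
  · simp [aa_odd k hk]

theorem GF_differentiableAt (b : ℕ) (hb : 2 ≤ b) (s : ℂ) (h1 : s ≠ 1) (h2 : s ≠ 2)
    (h : ∀ k : ℕ, Even k → (b : ℂ) ^ (s + k - 2) ≠ 1) : DifferentiableAt ℂ (GF b) s := by
  have hs := idx_spec s
  have hL : 3 ≤ idx s := by unfold idx; omega
  refine DifferentiableAt.congr_of_eventuallyEq ?_ (GF_eventuallyEq b hb (idx s) hL s hs)
  unfold GG
  refine DifferentiableAt.div (DifferentiableAt.add ?_ (HH_differentiableAt b _ hL s hs)) ?_ ?_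
  · exact DifferentiableAt.fun_sum fun k _ => term_diff b hb k s (h k)
  · fun_prop
  · exact mul_ne_zero (sub_ne_zero.2 h1) (sub_ne_zero.2 h2)

theorem digitSum_bound (b : ℕ) (hb : 2 ≤ b) (ε : ℝ) (hε : 0 < ε) :
    ∃ C : ℝ, 0 ≤ C ∧ ∀ n : ℕ, n ≠ 0 → (digitSum b n : ℝ) ≤ C * (n : ℝ) ^ ε := by
  have hlb : 0 < Real.log b := Real.log_pos (by exact_mod_cast (by omega : 1 < b))
  refine ⟨(1 / (ε * Real.log b) + 1) * b, by positivity, fun n hn => ?_⟩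
  have h1 : digitSum b n ≤ (Nat.log b n + 1) * b := by
    unfold digitSum
    rw [← Nat.length_digits b n (by omega) hn]
    have := List.sum_le_card_nsmul (Nat.digits b n) b
      (fun x hx => (Nat.digits_lt_base (by omega) hx).le)
    simpa using this
  have hn1 : (1 : ℝ) ≤ n := by exact_mod_cast Nat.one_le_iff_ne_zero.2 hn
  have h2 : (Nat.log b n : ℝ) ≤ Real.log n / Real.log b := by
    rw [le_div_iff₀ hlb, ← Real.log_pow]
    apply Real.log_le_log
    · have : 0 < b := by omega
      positivity
    · exact_mod_cast Nat.pow_log_le_self b hn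
  have h3 : Real.log n ≤ (n : ℝ) ^ ε / ε := Real.log_le_rpow_div (by positivity) hε
  have h4 : (1 : ℝ) ≤ (n : ℝ) ^ ε := Real.one_le_rpow hn1 hε.le
  have h5 : (Nat.log b n : ℝ) ≤ 1 / (ε * Real.log b) * (n : ℝ) ^ ε := by
    calc _ ≤ _ := h2
      _ ≤ ((n : ℝ) ^ ε / ε) / Real.log b := by gcongr
      _ = _ := by field_simp
  calc (digitSum b n : ℝ) ≤ (Nat.log b n + 1) * b := by exact_mod_cast h1
    _ ≤ (1 / (ε * Real.log b) * (n : ℝ) ^ ε + (n : ℝ) ^ ε) * b := by gcongr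
    _ = _ := by ring

theorem cumDigitSum_bound (b : ℕ) (hb : 2 ≤ b) (ε : ℝ) (hε : 0 < ε) :
    ∃ C : ℝ, ∀ n : ℕ, n ≠ 0 → ‖(cumDigitSum b n : ℂ)‖ ≤ C * (n : ℝ) ^ (1 + ε) := by
  obtain ⟨C, hC, h⟩ := digitSum_bound b hb ε hε
  refine ⟨C, fun n hn => ?_⟩
  have hn1 : (0 : ℝ) < n := by exact_mod_cast Nat.pos_of_ne_zero hn
  rw [Complex.norm_natCast]
  unfold cumDigitSum
  push_cast
  calc ∑ m ∈ Finset.range n, (digitSum b m : ℝ) ≤ ∑ m ∈ Finset.range n, C * (n : ℝ) ^ ε := by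
        refine Finset.sum_le_sum fun m hm => ?_
        by_cases hm0 : m = 0
        · subst hm0
          simp only [digitSum, Nat.digits_zero, List.sum_nil, Nat.cast_zero]
          positivity
        · refine (h m hm0).trans ?_
          have : (m : ℝ) ≤ n := by exact_mod_cast (Finset.mem_range.1 hm).le
          gcongr
    _ = C * (n : ℝ) ^ (1 + ε) := by
        rw [Real.rpow_add hn1]; simp; ring

theorem abscissa_le (b : ℕ) (hb : 2 ≤ b) :
    LSeries.abscissaOfAbsConv (fun n => (cumDigitSum b n : ℂ)) ≤ 2 := by
  refine le_of_forall_gt_imp_ge_of_dense fun a ha => ?_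
  obtain ⟨r, hr1, hr2⟩ := EReal.lt_iff_exists_real_btwn.1 ha
  have hr : (2 : ℝ) < r := EReal.coe_lt_coe_iff.1 hr1
  have := LSeries.abscissaOfAbsConv_le_of_le_const_mul_rpow (f := fun n => (cumDigitSum b n : ℂ))
    (x := 1 + (r - 2)) (cumDigitSum_bound b hb (r - 2) (by linarith))
  refine this.trans ?_
  refine le_trans ?_ hr2.le
  have : 1 + (r - 2) + 1 = r := by ring
  exact_mod_cast this.le

theorem LSeries_eq_tsum (b : ℕ) (hb : 2 ≤ b) (s : ℂ) (hs : 2 < s.re) :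
    LSeries (fun n => (cumDigitSum b n : ℂ)) s =
      ∑' n : ℕ, (cumDigitSum b (n + 1) : ℂ) * ((n + 1 : ℕ) : ℂ) ^ (-s) := by
  have hsum := LSeriesSummable_of_abscissaOfAbsConv_lt_re
    (lt_of_le_of_lt (abscissa_le b hb) (EReal.coe_lt_coe_iff.2 hs : (2 : EReal) < s.re))
  unfold LSeries
  rw [← hsum.sum_add_tsum_nat_add 1]
  simp only [Finset.sum_range_one, LSeries.term_zero, zero_add]
  refine tsum_congr fun n => ?_
  rw [LSeries.term_of_ne_zero (by omega), Complex.cpow_neg, div_eq_mul_inv]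

theorem GF_dirichlet (b : ℕ) (hb : 2 ≤ b) (s : ℂ) (hs : 2 < s.re) :
    GF b s = ∑' n : ℕ, (cumDigitSum b (n + 1) : ℂ) * ((n + 1 : ℕ) : ℂ) ^ (-s) := by
  set U : Set ℂ := {s : ℂ | 2 < s.re} with hU
  have hUo : IsOpen U := isOpen_lt continuous_const Complex.continuous_re
  have hUc : IsPreconnected U := (convex_halfSpace_re_gt 2).isPreconnected
  have h1 : AnalyticOnNhd ℂ (GF b) U := by
    refine DifferentiableOn.analyticOnNhd (fun z hz => ?_) hUo
    have hz' : 2 < z.re := hz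
    refine (GF_differentiableAt b hb z ?_ ?_ ?_).differentiableWithinAt
    · rintro rfl; norm_num at hz'
    · rintro rfl; norm_num at hz'
    · intro k _
      apply cpow_ne_one b hb
      simp
      linarith [(Nat.cast_nonneg k : (0 : ℝ) ≤ k)]
  have h2 : AnalyticOnNhd ℂ (LSeries (fun n => (cumDigitSum b n : ℂ))) U := by
    refine (LSeries_analyticOnNhd _).mono fun z hz => ?_
    exact lt_of_le_of_lt (abscissa_le b hb) (EReal.coe_lt_coe_iff.2 hz : (2 : EReal) < z.re)
  have h3 : (7 : ℂ) ∈ U := by simp [hU]; norm_num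
  have h4 : GF b =ᶠ[𝓝 (7 : ℂ)] LSeries (fun n => (cumDigitSum b n : ℂ)) := by
    have : {z : ℂ | 6 < z.re} ∈ 𝓝 (7 : ℂ) :=
      (isOpen_lt continuous_const Complex.continuous_re).mem_nhds (by simp; norm_num)
    filter_upwards [this] with z hz
    have hz' : 6 < z.re := hz
    rw [LSeries_eq_tsum b hb z (by linarith), GG_large b hb z hz]
  rw [← LSeries_eq_tsum b hb s hs]
  exact h1.eqOn_of_preconnected_of_eventuallyEq h2 hUc h3 h4 hs

/-! ### Part 8: residues -/

theorem cpow_hasDerivAt (b : ℕ) (hb : 2 ≤ b) (w : ℂ) :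
    HasDerivAt (fun z : ℂ => (b : ℂ) ^ z) (Real.log b * (b : ℂ) ^ w) w := by
  have h := (hasDerivAt_id w).const_cpow (c := (b : ℂ)) (Or.inl (by exact_mod_cast (by omega : b ≠ 0)))
  refine h.congr_deriv ?_
  rw [← Complex.natCast_log]
  simp
  ring

theorem DD_residue (b : ℕ) (hb : 2 ≤ b) (w : ℂ) (hw : (b : ℂ) ^ w = 1) :
    Tendsto (fun z => (z - w) * DD b z) (𝓝[≠] w)
      (𝓝 (riemannZeta w * (1 - b) / Real.log b)) := by
  have hb1 : (b : ℂ) ≠ 1 := by exact_mod_cast (by omega : b ≠ 1)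
  have hw1 : w ≠ 1 := by rintro rfl; rw [Complex.cpow_one] at hw; exact hb1 hw
  have hd := cpow_hasDerivAt b hb w
  have h1 : Tendsto (slope (fun z : ℂ => (b : ℂ) ^ z) w) (𝓝[≠] w) (𝓝 (Real.log b)) := by
    have := hasDerivAt_iff_tendsto_slope.1 hd
    rwa [hw, mul_one] at this
  have h2 : Tendsto riemannZeta (𝓝[≠] w) (𝓝 (riemannZeta w)) :=
    ((differentiableAt_riemannZeta hw1).continuousAt.tendsto).mono_left nhdsWithin_le_nhds
  have h3 : Tendsto (fun z : ℂ => (b : ℂ) ^ z - b) (𝓝[≠] w) (𝓝 (1 - b)) := by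
    have := (hd.continuousAt.tendsto.sub_const (b : ℂ)).mono_left
      (nhdsWithin_le_nhds (s := {w}ᶜ))
    rwa [hw] at this
  refine ((h2.mul h3).div h1 (log_ne b hb)).congr' ?_
  have hne : ∀ᶠ z in 𝓝[≠] w, z ≠ 1 :=
    (continuousAt_id.eventually_ne hw1).filter_mono nhdsWithin_le_nhds
  filter_upwards [hne] with z hz
  rw [DD_of_ne b z hz]
  simp only [Pi.div_apply, slope_def_field, hw]
  rw [div_div_eq_mul_div]
  ring

theorem GF_residue (b : ℕ) (hb : 2 ≤ b) (w : ℂ) (hw : (b : ℂ) ^ w = 1) (hwr : w.re = 0) (k₀ : ℕ)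
    (p : ℂ) (hp : p = 2 - (k₀ : ℂ) + w) (hp1 : p ≠ 1) (hp2 : p ≠ 2) :
    Tendsto (fun s => (s - p) * GF b s) (𝓝[≠] p)
      (𝓝 (aa k₀ * poch k₀ (p - 2) * (riemannZeta w * (1 - b) / Real.log b) /
        ((p - 1) * (p - 2)))) := by
  obtain ⟨L, hL3, hLk, hLp⟩ : ∃ L : ℕ, 3 ≤ L ∧ k₀ < L ∧ 6 - (L : ℝ) < p.re := by
    refine ⟨k₀ + idx p, by unfold idx; omega, by unfold idx; omega, ?_⟩
    have := idx_spec p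
    push_cast
    linarith [(Nat.cast_nonneg k₀ : (0 : ℝ) ≤ k₀)]
  have hev := (GF_eventuallyEq b hb L hL3 p hLp).filter_mono (nhdsWithin_le_nhds (s := {p}ᶜ))
  have hsub : Tendsto (fun s : ℂ => s - p) (𝓝[≠] p) (𝓝 0) := by
    have : Tendsto (fun s : ℂ => s - p) (𝓝 p) (𝓝 (p - p)) := (continuous_id.sub continuous_const).tendsto p
    rw [sub_self] at this
    exact this.mono_left nhdsWithin_le_nhds
  have hH : Tendsto (fun s => (s - p) * HH b L s) (𝓝[≠] p) (𝓝 0) := by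
    have := hsub.mul ((HH_differentiableAt b L hL3 p hLp).continuousAt.tendsto.mono_left
      (nhdsWithin_le_nhds (s := {p}ᶜ)))
    rwa [zero_mul] at this
  have hterm : ∀ k ∈ Finset.range L, Tendsto
      (fun s => (s - p) * (aa k * poch k (s - 2) * DD b (s + k - 2))) (𝓝[≠] p)
      (𝓝 (if k = k₀ then aa k₀ * poch k₀ (p - 2) * (riemannZeta w * (1 - b) / Real.log b) else 0)) := by
    intro k _
    split_ifs with h
    · subst h
      have hc : Tendsto (fun s : ℂ => s + k - 2) (𝓝[≠] p) (𝓝[≠] w) := by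
        refine tendsto_nhdsWithin_iff.2 ⟨?_, ?_⟩
        · have : Tendsto (fun s : ℂ => s + k - 2) (𝓝 p) (𝓝 (p + k - 2)) :=
            ((continuous_id.add continuous_const).sub continuous_const).tendsto p
          rw [show p + k - 2 = w by rw [hp]; ring] at this
          exact this.mono_left nhdsWithin_le_nhds
        · filter_upwards [self_mem_nhdsWithin] with s hs
          intro h
          apply hs
          simp only [Set.mem_singleton_iff] at h ⊢
          rw [hp, ← h]; ring
      have h1 := (DD_residue b hb w hw).comp hc
      have h2 : Tendsto (fun s => aa k * poch k (s - 2)) (𝓝[≠] p) (𝓝 (aa k * poch k (p - 2))) :=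
        (((pochD k p).const_mul (aa k)).continuousAt.tendsto).mono_left nhdsWithin_le_nhds
      refine (h2.mul h1).congr fun s => ?_
      simp only [Function.comp]
      rw [hp]
      ring
    · have hd := term_diff b hb k p (fun _ => by
        apply cpow_ne_one b hb
        rw [hp]
        simp [hwr]
        intro h'
        apply h
        have : (k : ℝ) = k₀ := by linarith
        exact_mod_cast this)
      have := hsub.mul (hd.continuousAt.tendsto.mono_left (nhdsWithin_le_nhds (s := {p}ᶜ)))
      rwa [zero_mul] at this
  have hsum := (tendsto_finsetSum _ hterm).add hH
  rw [Finset.sum_ite_eq', if_pos (Finset.mem_range.2 hLk), add_zero] at hsum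
  have hden : Tendsto (fun s : ℂ => (s - 1) * (s - 2)) (𝓝[≠] p) (𝓝 ((p - 1) * (p - 2))) :=
    (((continuous_id.sub continuous_const).mul (continuous_id.sub continuous_const)).tendsto p).mono_left
      nhdsWithin_le_nhds
  refine (hsum.div hden (mul_ne_zero (sub_ne_zero.2 hp1) (sub_ne_zero.2 hp2))).congr' ?_
  filter_upwards [hev] with s hs
  rw [hs]
  unfold GG
  simp only [Pi.div_apply]
  rw [← Finset.mul_sum]
  ring

theorem HH_two (b L : ℕ) (hL : 3 ≤ L) : HH b L 2 = 0 := by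
  unfold HH
  rw [← tsum_zero (α := ℂ) (β := ℕ)]
  refine tsum_congr fun n => ?_
  obtain ⟨M, rfl⟩ : ∃ M, L = M + 1 := ⟨L - 1, by omega⟩
  unfold ee
  rw [Finset.sum_range_succ']
  simp [poch_succ_left, Dl]
  right
  norm_num

theorem HH_one (b L : ℕ) (hL : 3 ≤ L) : HH b L 1 = 0 := by
  unfold HH
  rw [← tsum_zero (α := ℂ) (β := ℕ)]
  refine tsum_congr fun n => ?_
  obtain ⟨M, rfl⟩ : ∃ M, L = M + 1 + 1 := ⟨L - 2, by omega⟩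
  have h1 : ((1 : ℂ) - 2 + 1) = 0 := by norm_num
  have h2 : Dl (1 + (0 : ℕ) - 2) n = 0 := by
    have : -((1 : ℂ) + (0 : ℕ) - 2) = 1 := by push_cast; ring
    unfold Dl
    rw [this]
    simp only [Complex.cpow_one]
    push_cast
    ring
  unfold ee
  rw [Finset.sum_range_succ', Finset.sum_range_succ', h2, aa_odd (0 + 1) (by decide)]
  simp only [poch_succ_left, h1]
  simp

theorem GF_at_one (b : ℕ) (hb : 2 ≤ b) :
    Tendsto (fun s : ℂ => (s - 1) * GF b s) (𝓝[≠] (1 : ℂ)) (𝓝 (((b : ℂ) + 1) / 12)) := by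
  set L : ℕ := 6 with hLdef
  have hL3 : 3 ≤ L := by omega
  have hLp : 6 - (L : ℝ) < (1 : ℂ).re := by simp [hLdef]
  have hb0 : (b : ℂ) ≠ 0 := by exact_mod_cast (by omega : b ≠ 0)
  have hb1 : (b : ℂ) - 1 ≠ 0 := sub_ne_zero.2 (by exact_mod_cast (by omega : b ≠ 1))
  have hev := (GF_eventuallyEq b hb L hL3 1 hLp).filter_mono (nhdsWithin_le_nhds (s := {1}ᶜ))
  have hP : DifferentiableAt ℂ (fun s => (∑ k ∈ Finset.range L,
      aa k * poch k (s - 2) * DD b (s + k - 2) + HH b L s) / (s - 2)) 1 := by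
    refine DifferentiableAt.div (DifferentiableAt.add ?_ (HH_differentiableAt b _ hL3 1 hLp)) ?_ ?_
    · refine DifferentiableAt.fun_sum fun k _ => term_diff b hb k 1 fun hk => ?_
      apply cpow_ne_one b hb
      simp
      intro h
      have h' : (k : ℝ) = 1 := by linarith
      have : k = 1 := by exact_mod_cast h'
      subst this
      simp at hk
    · fun_prop
    · norm_num
  have hval : (∑ k ∈ Finset.range L, aa k * poch k ((1 : ℂ) - 2) * DD b (1 + k - 2) + HH b L 1) /
      (1 - 2) = ((b : ℂ) + 1) / 12 := by
    have h1 : ((1 : ℂ) - 2 + 1) = 0 := by norm_num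
    have hD : DD b (1 + (0 : ℕ) - 2) = -((b : ℂ) + 1) / 12 := by
      have e : (1 + (0 : ℕ) - 2 : ℂ) = -((1 : ℕ) : ℂ) := by push_cast; ring
      rw [e, DD_of_ne _ _ (by norm_num), riemannZeta_neg_nat_eq_bernoulli]
      have : bernoulli 2 = 1 / 6 := by rw [bernoulli_two]; norm_num
      norm_num [this, Complex.cpow_neg_one]
      have h3 : (1 : ℂ) - b ≠ 0 := by rw [← neg_sub]; exact neg_ne_zero.2 hb1
      have : (b : ℂ)⁻¹ - 1 ≠ 0 := by
        rw [show (b : ℂ)⁻¹ - 1 = (1 - b) / b by field_simp]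
        exact div_ne_zero h3 hb0
      rw [div_eq_div_iff this (by norm_num)]
      field_simp
      ring
    rw [HH_one b L hL3, hLdef, Finset.sum_range_succ', Finset.sum_range_succ', hD,
      aa_odd (0 + 1) (by decide), aa_zero]
    simp only [poch_succ_left, h1, poch_zero]
    simp
    ring
  have := hP.continuousAt.tendsto
  rw [hval] at this
  refine (this.mono_left (nhdsWithin_le_nhds (s := {1}ᶜ))).congr' ?_
  filter_upwards [hev, self_mem_nhdsWithin] with s hs hs1
  have : s - 1 ≠ 0 := sub_ne_zero.2 hs1
  rw [hs]
  unfold GG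
  rw [mul_comm (s - 1) (s - 2), ← div_div]
  field_simp

/-! ### Part 9: the double pole at `2` -/

theorem qq_facts (b : ℕ) (hb : 2 ≤ b) :
    Differentiable ℂ (dslope (fun w : ℂ => (b : ℂ) ^ w) 0) ∧
    dslope (fun w : ℂ => (b : ℂ) ^ w) 0 0 = Real.log b ∧
    HasDerivAt (dslope (fun w : ℂ => (b : ℂ) ^ w) 0) ((Real.log b : ℂ) ^ 2 / 2) 0 := by
  set f : ℂ → ℂ := fun w : ℂ => (b : ℂ) ^ w with hf
  set q := dslope f 0 with hq
  have hfd : ∀ w, HasDerivAt f (Real.log b * f w) w := cpow_hasDerivAt b hb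
  have hqd : Differentiable ℂ q := by
    rw [← differentiableOn_univ, hq, Complex.differentiableOn_dslope (by simp)]
    exact fun w _ => (hfd w).differentiableAt.differentiableWithinAt
  have hf0 : f 0 = 1 := by simp [hf]
  have hq0 : q 0 = Real.log b := by
    rw [hq, dslope_same, (hfd 0).deriv, hf0, mul_one]
  refine ⟨hqd, hq0, ?_⟩
  have hfq : f = fun u => 1 + u * q u := by
    funext u
    have := sub_smul_dslope f 0 u
    rw [hf0, sub_zero, smul_eq_mul] at this
    rw [hq, this]; ring
  have h1 : ∀ u, HasDerivAt f (q u + u * deriv q u) u := by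
    intro u
    rw [hfq]
    have := ((hasDerivAt_id u).mul (hqd u).hasDerivAt).const_add 1
    refine this.congr_deriv ?_
    simp
  have h2 : (fun u => Real.log b * f u) = fun u => q u + u * deriv q u := by
    funext u
    exact (hfd u).unique (h1 u)
  have hqd2 : DifferentiableAt ℂ (deriv q) 0 :=
    ((hqd.differentiableOn (s := Set.univ)).deriv isOpen_univ).differentiableAt univ_mem
  have h3 : HasDerivAt (fun u => Real.log b * f u) (Real.log b * (Real.log b * f 0)) 0 :=
    (hfd 0).const_mul _
  have h4 : HasDerivAt (fun u => q u + u * deriv q u) (deriv q 0 + (1 * deriv q 0 + 0 * deriv (deriv q) 0)) 0 :=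
    (hqd 0).hasDerivAt.add ((hasDerivAt_id (0 : ℂ)).mul hqd2.hasDerivAt)
  rw [h2] at h3
  have h5 := h3.unique h4
  refine (hqd 0).hasDerivAt.congr_deriv ?_
  rw [hf0] at h5
  linear_combination (-1 / 2) * h5

/-- regularised `u * DD b u`. -/
def WW (b : ℕ) (u : ℂ) : ℂ :=
  riemannZeta u * ((b : ℂ) ^ u - b) / dslope (fun w : ℂ => (b : ℂ) ^ w) 0 u

theorem WW_zero (b : ℕ) (hb : 2 ≤ b) : WW b 0 = ((b : ℂ) - 1) / (2 * Real.log b) := by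
  have := log_ne b hb
  unfold WW
  rw [(qq_facts b hb).2.1, riemannZeta_zero, Complex.cpow_zero]
  field_simp
  ring

theorem WW_hasDerivAt (b : ℕ) (hb : 2 ≤ b) : HasDerivAt (WW b)
    ((((b : ℂ) - 1) / (2 * Real.log b)) * Real.log (2 * Real.pi) - ((b : ℂ) + 1) / 4) 0 := by
  have hl := log_ne b hb
  obtain ⟨h1, h2, h3⟩ := qq_facts b hb
  have hz : HasDerivAt riemannZeta (-(Real.log (2 * Real.pi) : ℂ) / 2) 0 := by
    have := (differentiableAt_riemannZeta (s := 0) (by norm_num)).hasDerivAt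
    refine this.congr_deriv ?_
    rw [deriv_riemannZeta_zero, Complex.ofReal_log (by positivity)]
    push_cast
    rfl
  have hp := (cpow_hasDerivAt b hb 0).sub_const (b : ℂ)
  have := (hz.mul hp).div h3 (by rw [h2]; exact hl)
  refine this.congr_deriv ?_
  simp only [Pi.mul_apply]
  rw [h2, riemannZeta_zero, Complex.cpow_zero]
  field_simp
  ring

theorem WW_eq (b : ℕ) (u : ℂ) (hu : u ≠ 0) (hu1 : u ≠ 1) : u * DD b u = WW b u := by
  rw [DD_of_ne b u hu1]
  unfold WW
  rw [dslope_of_ne _ hu, slope_def_field, Complex.cpow_zero, sub_zero, div_div_eq_mul_div]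
  ring

theorem GF_at_two (b : ℕ) (hb : 2 ≤ b) : ∃ Y : ℂ → ℂ,
    HasDerivAt Y ((((b : ℂ) - 1) / (2 * Real.log b)) * (Real.log (2 * Real.pi) - 1)
      - ((b : ℂ) + 1) / 4) 2 ∧ Y 2 = ((b : ℂ) - 1) / (2 * Real.log b) ∧
    ∀ᶠ s in 𝓝[≠] (2 : ℂ), (s - 2) ^ 2 * GF b s = Y s := by
  have hL3 : 3 ≤ 5 + 1 := by omega
  have hLp : 6 - ((5 + 1 : ℕ) : ℝ) < (2 : ℂ).re := by norm_num
  have hev := (GF_eventuallyEq b hb (5 + 1) hL3 2 hLp).filter_mono (nhdsWithin_le_nhds (s := {2}ᶜ))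
  set P : ℂ → ℂ := fun s => ∑ k ∈ Finset.range 5,
    aa (k + 1) * poch (k + 1) (s - 2) * DD b (s + (k + 1 : ℕ) - 2) + HH b (5 + 1) s with hPdef
  have hP : DifferentiableAt ℂ P 2 := by
    refine DifferentiableAt.add ?_ (HH_differentiableAt b _ hL3 2 hLp)
    refine DifferentiableAt.fun_sum fun k _ => term_diff b hb (k + 1) 2 fun hk => ?_
    apply cpow_ne_one b hb
    simp
    exact_mod_cast k.succ_ne_zero
  have hP2 : P 2 = 0 := by
    simp only [hPdef]
    rw [HH_two b (5 + 1) hL3]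
    simp [poch_succ_left]
  have hW : HasDerivAt (fun s => WW b (s - 2))
      ((((b : ℂ) - 1) / (2 * Real.log b)) * Real.log (2 * Real.pi) - ((b : ℂ) + 1) / 4) 2 := by
    have := WW_hasDerivAt b hb
    rw [show (0 : ℂ) = 2 - 2 by norm_num] at this
    exact this.comp_sub_const 2 2
  refine ⟨fun s => (WW b (s - 2) + (s - 2) * P s) / (s - 1), ?_, ?_, ?_⟩
  · have h1 : HasDerivAt (fun s : ℂ => s - 2) 1 2 := (hasDerivAt_id _).sub_const 2
    have h2 : HasDerivAt (fun s : ℂ => s - 1) 1 2 := (hasDerivAt_id _).sub_const 1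
    have := (hW.add (h1.mul hP.hasDerivAt)).div h2 (by norm_num)
    refine this.congr_deriv ?_
    simp only [Pi.add_apply, Pi.mul_apply, sub_self, hP2, WW_zero b hb]
    norm_num
    ring
  · simp only [sub_self, WW_zero b hb]
    norm_num
  · have hne : ∀ᶠ s in 𝓝[≠] (2 : ℂ), s ≠ 3 :=
      (continuousAt_id.eventually_ne (by norm_num)).filter_mono nhdsWithin_le_nhds
    filter_upwards [hev, self_mem_nhdsWithin, hne] with s hs hs2 hs3
    have h0 : s - 2 ≠ 0 := sub_ne_zero.2 hs2
    have hw := WW_eq b (s - 2) h0 (by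
      intro h; apply hs3; linear_combination h)
    rw [hs, ← hw]
    unfold GG
    rw [Finset.sum_range_succ']
    simp only [aa_zero, poch_zero, Nat.cast_zero, add_zero, one_mul]
    rw [← div_div]
    simp only [hPdef]
    field_simp
    ring

/-! ### The main theorem -/

theorem Gb_meromorphic_continuation (b : ℕ) (hb : 2 ≤ b) :
    ∃ G : ℂ → ℂ,
      -- (i) analytic off the set of possible poles
      (∀ s : ℂ,
        s ∉ ({z : ℂ | ∃ m : ℤ, z = 2 + 2 * Real.pi * Complex.I * m / Real.log b} ∪
             {(1 : ℂ)} ∪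
             {z : ℂ | ∃ m : ℤ, ∃ k : ℕ, Even k ∧ 2 ≤ k ∧
               z = 2 - (k : ℂ) + 2 * Real.pi * Complex.I * m / Real.log b}) →
        DifferentiableAt ℂ G s) ∧
      -- (ii) agrees with the Dirichlet series for Re(s) > 2
      (∀ s : ℂ, 2 < s.re →
        G s = ∑' n : ℕ, (cumDigitSum b (n + 1) : ℂ) * ((n + 1 : ℕ) : ℂ) ^ (-s)) ∧
      -- (iii) double pole at s = 2 with the stated Laurent expansion
      (Filter.Tendsto (fun s : ℂ => (s - 2) ^ 2 * G s) (𝓝[≠] (2 : ℂ))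
        (𝓝 (((b : ℂ) - 1) / (2 * Real.log b))) ∧
       Filter.Tendsto
        (fun s : ℂ => ((s - 2) ^ 2 * G s - ((b : ℂ) - 1) / (2 * Real.log b)) / (s - 2))
        (𝓝[≠] (2 : ℂ))
        (𝓝 ((((b : ℂ) - 1) / (2 * Real.log b)) * (Real.log (2 * Real.pi) - 1)
            - ((b : ℂ) + 1) / 4))) ∧
      -- (iv) simple pole at s = 1 with residue (b+1)/12
      (Filter.Tendsto (fun s : ℂ => (s - 1) * G s) (𝓝[≠] (1 : ℂ))
        (𝓝 (((b : ℂ) + 1) / 12))) ∧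
      -- (v) simple poles at s = 2 + 2πim/log b, m ≠ 0
      (∀ m : ℤ, m ≠ 0 →
        Filter.Tendsto
          (fun s : ℂ => (s - (2 + 2 * Real.pi * Complex.I * m / Real.log b)) * G s)
          (𝓝[≠] (2 + 2 * Real.pi * Complex.I * m / Real.log b))
          (𝓝 (-(((b : ℂ) - 1) / (2 * Real.pi * Complex.I * m)) *
            (1 + 2 * Real.pi * Complex.I * m / Real.log b)⁻¹ *
            riemannZeta (2 * Real.pi * Complex.I * m / Real.log b)))) ∧
      -- (vi) simple poles at s = 2 - k + 2πim/log b, k even ≥ 2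
      (∀ m : ℤ, ∀ k : ℕ, Even k → 2 ≤ k →
        Filter.Tendsto
          (fun s : ℂ =>
            (s - (2 - (k : ℂ) + 2 * Real.pi * Complex.I * m / Real.log b)) * G s)
          (𝓝[≠] (2 - (k : ℂ) + 2 * Real.pi * Complex.I * m / Real.log b))
          (𝓝 ((((b : ℂ) - 1) / Real.log b) *
            riemannZeta (2 * Real.pi * Complex.I * m / Real.log b) *
            ((bernoulli k : ℂ) / ((k : ℂ) * (Nat.factorial (k - 2) : ℂ))) *
            ∏ j ∈ Finset.Icc 1 (k - 2),
              (2 * Real.pi * Complex.I * m / Real.log b - (j : ℂ))))) := by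
  refine ⟨GF b, ?_, GF_dirichlet b hb, ?_, GF_at_one b hb, ?_, ?_⟩
  · intro s hs
    simp only [Set.mem_union, Set.mem_ofPred_eq, Set.mem_singleton_iff, not_or] at hs
    obtain ⟨⟨h2, h1⟩, h3⟩ := hs
    refine GF_differentiableAt b hb s h1 ?_ ?_
    · rintro rfl
      exact h2 ⟨0, by simp⟩
    · intro k hk hone
      obtain ⟨m, hm⟩ := cpow_eq_one b hb _ hone
      by_cases hk0 : k = 0
      · subst hk0
        apply h2
        refine ⟨m, ?_⟩
        rw [← hm]; push_cast; ring
      · apply h3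
        refine ⟨m, k, hk, ?_, ?_⟩
        · obtain ⟨r, rfl⟩ := hk; omega
        · rw [← hm]; ring
  · obtain ⟨Y, hY1, hY2, hY3⟩ := GF_at_two b hb
    constructor
    · have := hY1.continuousAt.tendsto
      rw [hY2] at this
      exact (this.mono_left nhdsWithin_le_nhds).congr' (hY3.mono fun s hs => hs.symm)
    · refine (hasDerivAt_iff_tendsto_slope.1 hY1).congr' (hY3.mono fun s hs => ?_)
      simp only [slope_def_field]
      rw [hs, hY2]
  · intro m hm
    have hl := log_ne b hb
    have hmC : (m : ℂ) ≠ 0 := by exact_mod_cast hm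
    have hpi : (Real.pi : ℂ) ≠ 0 := by exact_mod_cast Real.pi_ne_zero
    have hre := pole_re b m
    have hw1 := cpow_pole b hb m
    have hw0 : (2 * Real.pi * Complex.I * m / Real.log b : ℂ) ≠ 0 := by
      refine div_ne_zero ?_ hl
      simp [hpi, hmC]
    have hA : (2 * Real.pi * Complex.I * m : ℂ) =
        (2 * Real.pi * Complex.I * m / Real.log b : ℂ) * Real.log b := by field_simp
    rw [show -(((b : ℂ) - 1) / (2 * Real.pi * Complex.I * m)) =
      -(((b : ℂ) - 1) / ((2 * Real.pi * Complex.I * m / Real.log b : ℂ) * Real.log b)) by rw [← hA]]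
    generalize (2 * Real.pi * Complex.I * m / Real.log b : ℂ) = w at *
    have h1w : 1 + w ≠ 0 := by
      intro h
      have := congrArg Complex.re h
      simp [hre] at this
    have := GF_residue b hb w hw1 hre 0 (2 + w) (by simp)
      (by intro h; apply h1w; linear_combination h) (by simpa using hw0)
    convert this using 2
    rw [aa_zero, poch_zero, show 2 + w - 1 = 1 + w by ring, show 2 + w - 2 = w by ring]
    field_simp
    ring
  · intro m k hk hk2
    have hl := log_ne b hb
    have hre := pole_re b m
    have hw1 := cpow_pole b hb m
    generalize (2 * Real.pi * Complex.I * m / Real.log b : ℂ) = w at *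
    have hk2' : (2 : ℝ) ≤ k := by exact_mod_cast hk2
    have hp1 : 2 - (k : ℂ) + w ≠ 1 := by
      intro h
      have := congrArg Complex.re h
      simp [hre] at this
      linarith
    have hp2 : 2 - (k : ℂ) + w ≠ 2 := by
      intro h
      have := congrArg Complex.re h
      simp [hre] at this
      omega
    have := GF_residue b hb w hw1 hre k _ rfl hp1 hp2
    convert this using 2
    obtain ⟨i, rfl⟩ := Nat.exists_eq_add_of_le' hk2
    have hpoch : ∀ i : ℕ, poch i (w - i) = ∏ j ∈ Finset.Icc 1 i, (w - (j : ℂ)) := by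
      intro i
      induction i with
      | zero => simp [poch_zero]
      | succ i ih =>
        rw [poch_succ_left, Finset.prod_Icc_succ_top (by omega), ← ih]
        rw [show w - ((i + 1 : ℕ) : ℂ) + 1 = w - i by push_cast; ring]
        ring
    rw [show i + 2 - 2 = i by omega, ← hpoch i]
    have hP : poch (i + 2) (2 - ((i + 2 : ℕ) : ℂ) + w - 2) =
        (2 - ((i + 2 : ℕ) : ℂ) + w - 2) * ((2 - ((i + 2 : ℕ) : ℂ) + w - 1) * poch i (w - i)) := by
      rw [poch_succ_left, poch_succ_left]
      rw [show 2 - ((i + 2 : ℕ) : ℂ) + w - 2 + 1 = 2 - ((i + 2 : ℕ) : ℂ) + w - 1 by ring,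
        show 2 - ((i + 2 : ℕ) : ℂ) + w - 1 + 1 = w - i by push_cast; ring]
    rw [hP]
    have e1 := sub_ne_zero.2 hp1
    have e2 := sub_ne_zero.2 hp2
    generalize 2 - ((i + 2 : ℕ) : ℂ) + w - 1 = u at *
    generalize 2 - ((i + 2 : ℕ) : ℂ) + w - 2 = v at *
    unfold aa
    rw [Nat.factorial_succ, Nat.factorial_succ]
    have hf : (i.factorial : ℂ) ≠ 0 := by exact_mod_cast i.factorial_ne_zero
    have hi1 : (i : ℂ) + 1 ≠ 0 := by exact_mod_cast i.succ_ne_zero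
    have hi2 : (i : ℂ) + 1 + 1 ≠ 0 := by exact_mod_cast (i + 1).succ_ne_zero
    have hi3 : (i : ℂ) + 2 ≠ 0 := by exact_mod_cast (i + 1).succ_ne_zero
    push_cast
    field_simp
    ring
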